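/- (Change of shift) Let ψ be a regular N-function such that both ψ and its conjugate ψ* satisfy the Δ₂-condition. Then for every δ ∈ (0,1) there exists a constant c_δ > 0, depending only on δ, Δ₂(ψ) and Δ₂(ψ*), such that for every d, n ≥ 1, every P, Q ∈ ℝ^{d×n} and every t ≥ 0: ψ_{|P|}(t) ≤ c_δ·ψ_{|Q|}(t) + δ·ψ_{|P|}(|P−Q|) and (ψ_{|P|})*(t) ≤ c_δ·(ψ_{|Q|})*(t) + δ·ψ_{|P|}(|P−Q|), where (ψ_a)* denotes the conjugate of the shifted N-function ψ_a and |·| is the Frobenius norm on ℝ^{d×n}. -/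

import Mathlib

open Real Filter Set Topology

noncomputable section

/-- An N-function: convex on `[0,∞)`, vanishing at `0`, positive on `(0,∞)`,
with `ψ t / t → 0` as `t → 0⁺` and `ψ t / t → ∞` as `t → ∞`. -/
def IsNFunction (ψ : ℝ → ℝ) : Prop :=
  ConvexOn ℝ (Set.Ici 0) ψ ∧ ψ 0 = 0 ∧ (∀ t > 0, 0 < ψ t) ∧
    Filter.Tendsto (fun t => ψ t / t) (nhdsWithin 0 (Set.Ioi 0)) (nhds 0) ∧
    Filter.Tendsto (fun t => ψ t / t) Filter.atTop Filter.atTop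

/-- A regular N-function: an N-function which is `C¹` on `[0,∞)`, `C²` on `(0,∞)`,
with `ψ'' t > 0` for all `t > 0`. -/
def IsRegularNFunction (ψ : ℝ → ℝ) : Prop :=
  IsNFunction ψ ∧ ContDiffOn ℝ 1 ψ (Set.Ici 0) ∧ ContDiffOn ℝ 2 ψ (Set.Ioi 0) ∧
    ∀ t > 0, 0 < deriv (deriv ψ) t

/-- A balanced N-function with characteristics `(γ₁, γ₂)`. -/
def IsBalancedNFunction (ψ : ℝ → ℝ) (γ₁ γ₂ : ℝ) : Prop :=
  IsRegularNFunction ψ ∧ 0 < γ₁ ∧ γ₁ ≤ 1 ∧ 1 ≤ γ₂ ∧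
    ∀ t > 0, γ₁ * deriv ψ t ≤ t * deriv (deriv ψ) t ∧
      t * deriv (deriv ψ) t ≤ γ₂ * deriv ψ t

/-- The conjugate N-function `ψ*(t) = sup_{s ≥ 0} (s·t − ψ(s))`. -/
def conjNF (ψ : ℝ → ℝ) (t : ℝ) : ℝ :=
  ⨆ s : Set.Ici (0:ℝ), ((s : ℝ) * t - ψ s)

/-- `ψ` satisfies the Δ₂-condition with constant `K`. -/
def SatisfiesDelta2 (ψ : ℝ → ℝ) (K : ℝ) : Prop :=
  2 < K ∧ ∀ t ≥ (0:ℝ), ψ (2 * t) ≤ K * ψ t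

/-- The derivative `ψ'_a(t) = ψ'(a+t)·t/(a+t)` of the shifted N-function. -/
def shiftDF (ψ : ℝ → ℝ) (a t : ℝ) : ℝ := deriv ψ (a + t) * t / (a + t)

/-- The shifted N-function `ψ_a(t) = ∫₀ᵗ ψ'(a+s)·s/(a+s) ds`. -/
def shiftNF (ψ : ℝ → ℝ) (a t : ℝ) : ℝ := ∫ s in (0:ℝ)..t, shiftDF ψ a s

/-- Frobenius norm of a `d×n` real matrix. -/
def frobNorm {d n : ℕ} (P : Fin d → Fin n → ℝ) : ℝ :=
  Real.sqrt (∑ i : Fin d, ∑ j : Fin n, (P i j) ^ 2)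

/-- Frobenius inner product `P : Q` of two `d×n` real matrices. -/
def frobInner {d n : ℕ} (P Q : Fin d → Fin n → ℝ) : ℝ :=
  ∑ i : Fin d, ∑ j : Fin n, P i j * Q i j

/-- `F(P) = √(φ'(|P|)/|P|)·P` (equal to `0` at `P = 0`). -/
def FmapNF (φ : ℝ → ℝ) {d n : ℕ} (P : Fin d → Fin n → ℝ) : Fin d → Fin n → ℝ :=
  Real.sqrt (deriv φ (frobNorm P) / frobNorm P) • P

/-- `F*(P) = √((φ*)'(|P|)/|P|)·P` (equal to `0` at `P = 0`). -/
def FstarNF (φ : ℝ → ℝ) {d n : ℕ} (P : Fin d → Fin n → ℝ) : Fin d → Fin n → ℝ :=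
  Real.sqrt (deriv (conjNF φ) (frobNorm P) / frobNorm P) • P

/-- The standard basis matrix with a `1` in entry `(k,l)`. -/
def basisMat {d n : ℕ} (k : Fin d) (l : Fin n) : Fin d → Fin n → ℝ :=
  fun i j => if i = k ∧ j = l then 1 else 0

/-- `𝒜` has `φ`-structure with constants `(γ₃, γ₄)`. -/
def HasPhiStructure {d n : ℕ} (A : (Fin d → Fin n → ℝ) → (Fin d → Fin n → ℝ))
    (φ : ℝ → ℝ) (γ₃ γ₄ : ℝ) : Prop :=
  0 < γ₃ ∧ γ₃ ≤ 1 ∧ 1 < γ₄ ∧ Continuous A ∧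
    ContDiffOn ℝ 1 A {P | P ≠ 0} ∧ A 0 = 0 ∧
    (∀ P : Fin d → Fin n → ℝ, P ≠ 0 → ∀ Q : Fin d → Fin n → ℝ,
      γ₃ * (deriv φ (frobNorm P) / frobNorm P) * (frobNorm Q) ^ 2 ≤
        ∑ i : Fin d, ∑ j : Fin n, ∑ k : Fin d, ∑ l : Fin n,
          fderiv ℝ A P (basisMat k l) i j * Q i j * Q k l) ∧
    (∀ P : Fin d → Fin n → ℝ, P ≠ 0 → ∀ (i k : Fin d) (j l : Fin n),
      |fderiv ℝ A P (basisMat k l) i j| ≤ γ₄ * (deriv φ (frobNorm P) / frobNorm P))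

/-!
The shift `a` enters `ψ_a'(t) = ψ'(a + t) t / (a + t)` only through `a + t`. When `|a - b| ≤ r` and
`t ≥ δ r`, the quantities `a + t` and `b + t` agree up to the factor `1 + 1/δ`, so the Δ₂-condition
for `ψ` makes `ψ_a(t)` and `ψ_b(t)` comparable; when `t ≤ δ r`, convexity gives
`ψ_a(t) ≤ ψ_a(δ r) ≤ δ ψ_a(r)`. This proves the first inequality.

For conjugates, `s ↦ N ψ_b(s / N)` has conjugate `N ψ_b*`, so it suffices to bound it by
`ψ_a(s) + δ ψ_a(r)`. The Δ₂-condition for `ψ*` says that `ψ` grows at least like a power larger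
than one, uniformly for all its shifts; hence a large `N` makes `N ψ_b(s / N)` a small multiple of
`ψ_b(s)`, which absorbs the constant of the previous comparison.
-/

section Convex

variable {S : Set ℝ} {f : ℝ → ℝ} {f' x y : ℝ}

lemma tangent_le_of_convexOn (hf : ConvexOn ℝ S f) (hx : x ∈ S) (hy : y ∈ S)
    (hd : HasDerivAt f f' x) : f x + f' * (y - x) ≤ f y := by
  rcases lt_trichotomy x y with hxy | rfl | hxy
  · have := hf.le_slope_of_hasDerivAt hx hy hxy hd
    rw [slope_def_field, le_div_iff₀ (by linarith)] at this
    linarith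
  · simp
  · have := hf.slope_le_of_hasDerivAt hy hx hxy hd
    rw [slope_def_field, div_le_iff₀ (by linarith)] at this
    linarith

end Convex

section Conjugate

variable {φ φ₁ φ₂ : ℝ → ℝ} {s t B : ℝ}

lemma conjNF_le (h : ∀ s, 0 ≤ s → s * t - φ s ≤ B) : conjNF φ t ≤ B :=
  haveI : Nonempty (Ici (0 : ℝ)) := nonempty_Ici.to_subtype
  ciSup_le fun s => h s s.2

lemma le_conjNF (hbdd : BddAbove (range fun s : Ici (0 : ℝ) => (s : ℝ) * t - φ s)) (hs : 0 ≤ s) :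
    s * t - φ s ≤ conjNF φ t :=
  le_ciSup hbdd (⟨s, hs⟩ : Ici (0 : ℝ))

lemma conjNF_nonneg (h0 : φ 0 ≤ 0) : 0 ≤ conjNF φ t :=
  Real.iSup_nonneg' ⟨⟨0, self_mem_Ici⟩, by simpa using h0⟩

lemma bddAbove_mul_sub_of_tendsto_div (h0 : ∀ s, 0 ≤ s → 0 ≤ φ s)
    (hφ : Tendsto (fun s => φ s / s) atTop atTop) (t : ℝ) :
    BddAbove (range fun s : Ici (0 : ℝ) => (s : ℝ) * t - φ s) := by
  obtain ⟨S, hS⟩ :=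
    ((eventually_gt_atTop 0).and (hφ.eventually_ge_atTop t)).exists_forall_of_atTop
  have hS0 : 0 < S := (hS S le_rfl).1
  refine ⟨S * |t|, ?_⟩
  rintro _ ⟨⟨s, hs : 0 ≤ s⟩, rfl⟩
  rcases le_total S s with hSs | hsS
  · have hφs : t * s ≤ φ s := (le_div_iff₀ (hS0.trans_le hSs)).1 (hS s hSs).2
    calc s * t - φ s ≤ 0 := by linarith
      _ ≤ S * |t| := by positivity
  · calc s * t - φ s ≤ s * t := sub_le_self _ (h0 s hs)
      _ ≤ s * |t| := by gcongr; exact le_abs_self t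
      _ ≤ S * |t| := by gcongr

lemma conjNF_le_mul_add_of_mul_div_le {N : ℝ} (hN : 0 < N)
    (hbdd : BddAbove (range fun s : Ici (0 : ℝ) => (s : ℝ) * t - φ₁ s))
    (h : ∀ s, 0 ≤ s → N * φ₁ (s / N) ≤ φ₂ s + B) :
    conjNF φ₂ t ≤ N * conjNF φ₁ t + B := by
  refine conjNF_le fun s hs => ?_
  calc s * t - φ₂ s ≤ s * t - N * φ₁ (s / N) + B := by linarith [h s hs]
    _ = N * (s / N * t - φ₁ (s / N)) + B := by field_simp
    _ ≤ N * conjNF φ₁ t + B := by gcongr; exact le_conjNF hbdd (by positivity)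

end Conjugate

/-- An N-function which is differentiable on `(0,∞)`, where convexity makes `ψ'` nondecreasing: the
class of `ψ` whose shifts `ψ_a` are compared below. The value `deriv ψ 0` is left free, since
`shiftDF` multiplies it by `0`. -/
structure IsDifferentiableNFunction (ψ : ℝ → ℝ) : Prop where
  isNFunction : IsNFunction ψ
  differentiableOn : DifferentiableOn ℝ ψ (Ioi 0)

lemma IsRegularNFunction.isDifferentiableNFunction {ψ : ℝ → ℝ} (h : IsRegularNFunction ψ) :
    IsDifferentiableNFunction ψ :=
  ⟨h.1, h.2.2.1.differentiableOn two_ne_zero⟩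

namespace IsDifferentiableNFunction

variable {ψ : ℝ → ℝ} {K a b s t x y : ℝ}

lemma convexOn (h : IsDifferentiableNFunction ψ) : ConvexOn ℝ (Ici 0) ψ := h.isNFunction.1

lemma map_zero (h : IsDifferentiableNFunction ψ) : ψ 0 = 0 := h.isNFunction.2.1

lemma pos (h : IsDifferentiableNFunction ψ) (hx : 0 < x) : 0 < ψ x := h.isNFunction.2.2.1 x hx

lemma nonneg (h : IsDifferentiableNFunction ψ) (hx : 0 ≤ x) : 0 ≤ ψ x :=
  hx.eq_or_lt.elim (fun hx => hx ▸ h.map_zero.ge) fun hx => (h.pos hx).le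

lemma tendsto_div_atTop (h : IsDifferentiableNFunction ψ) :
    Tendsto (fun t => ψ t / t) atTop atTop := h.isNFunction.2.2.2.2

lemma differentiableAt (h : IsDifferentiableNFunction ψ) (hx : 0 < x) : DifferentiableAt ℝ ψ x :=
  h.differentiableOn.differentiableAt (Ioi_mem_nhds hx)

lemma tangent_le (h : IsDifferentiableNFunction ψ) (hx : 0 < x) (hy : 0 ≤ y) :
    ψ x + deriv ψ x * (y - x) ≤ ψ y :=
  tangent_le_of_convexOn h.convexOn hx.le hy (h.differentiableAt hx).hasDerivAt

lemma le_mul_deriv (h : IsDifferentiableNFunction ψ) (hx : 0 < x) : ψ x ≤ x * deriv ψ x := by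
  linarith [h.tangent_le hx le_rfl, h.map_zero]

lemma mul_deriv_le (h : IsDifferentiableNFunction ψ) (hx : 0 < x) :
    x * deriv ψ x ≤ ψ (2 * x) := by
  linarith [h.tangent_le hx (y := 2 * x) (by positivity), h.pos hx]

lemma deriv_pos (h : IsDifferentiableNFunction ψ) (hx : 0 < x) : 0 < deriv ψ x :=
  pos_of_mul_pos_right ((h.pos hx).trans_le (h.le_mul_deriv hx)) hx.le

lemma deriv_le_deriv (h : IsDifferentiableNFunction ψ) (hx : 0 < x) (hxy : x ≤ y) :
    deriv ψ x ≤ deriv ψ y :=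
  (h.convexOn.subset Ioi_subset_Ici_self (convex_Ioi 0)).monotoneOn_deriv
    (fun _ hz => h.differentiableAt hz) hx (hx.trans_le hxy) hxy

lemma deriv_two_pow_mul_le (h : IsDifferentiableNFunction ψ) (hK : SatisfiesDelta2 ψ K) (m : ℕ)
    (hx : 0 < x) : deriv ψ (2 ^ m * x) ≤ K ^ (m + 1) * deriv ψ x := by
  have hK0 : 0 < K := two_pos.trans hK.1
  have iterate (k : ℕ) : ψ (2 ^ k * x) ≤ K ^ k * ψ x := by
    induction k with
    | zero => simp
    | succ k ih =>
      calc ψ (2 ^ (k + 1) * x) = ψ (2 * (2 ^ k * x)) := by ring_nf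
        _ ≤ K * ψ (2 ^ k * x) := hK.2 _ (by positivity)
        _ ≤ K * (K ^ k * ψ x) := by gcongr
        _ = K ^ (k + 1) * ψ x := by ring
  refine le_of_mul_le_mul_left ?_ hx
  calc x * deriv ψ (2 ^ m * x) ≤ 2 ^ m * x * deriv ψ (2 ^ m * x) := by
        have := h.deriv_pos (x := 2 ^ m * x) (by positivity)
        gcongr
        exact le_mul_of_one_le_left hx.le (one_le_pow₀ one_le_two)
    _ ≤ ψ (2 * (2 ^ m * x)) := h.mul_deriv_le (by positivity)
    _ = ψ (2 ^ (m + 1) * x) := by ring_nf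
    _ ≤ K ^ (m + 1) * ψ x := iterate (m + 1)
    _ ≤ K ^ (m + 1) * (x * deriv ψ x) := by gcongr; exact h.le_mul_deriv hx
    _ = x * (K ^ (m + 1) * deriv ψ x) := by ring

lemma exists_deriv_mul_le (K : ℝ) {C : ℝ} (hC : 0 < C) :
    ∃ D ≥ 1, ∀ ψ, IsDifferentiableNFunction ψ → SatisfiesDelta2 ψ K →
      ∀ x > 0, deriv ψ (C * x) ≤ D * deriv ψ x := by
  obtain ⟨m, hm⟩ := pow_unbounded_of_one_lt C one_lt_two
  refine ⟨max K 1 ^ (m + 1), one_le_pow₀ (le_max_right _ _), fun ψ h hK x hx => ?_⟩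
  rw [max_eq_left (one_lt_two.trans hK.1).le]
  calc deriv ψ (C * x) ≤ deriv ψ (2 ^ m * x) :=
        h.deriv_le_deriv (by positivity) (by gcongr)
    _ ≤ K ^ (m + 1) * deriv ψ x := h.deriv_two_pow_mul_le hK m hx

lemma mul_le_of_conjNF_delta2 (h : IsDifferentiableNFunction ψ)
    (hK : SatisfiesDelta2 (conjNF ψ) K) (hs : 0 < s) : K * ψ s ≤ ψ (K / 2 * s) := by
  have hK0 : 0 < K := two_pos.trans hK.1
  -- Equality in Young's inequality holds at `u = ψ' s`, so nothing is lost by passing to `ψ*`.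
  set u := deriv ψ s
  have young_eq : conjNF ψ u ≤ s * u - ψ s :=
    conjNF_le fun y hy => by linarith [h.tangent_le hs hy]
  have young : K / 2 * s * (2 * u) - ψ (K / 2 * s) ≤ conjNF ψ (2 * u) :=
    le_conjNF (bddAbove_mul_sub_of_tendsto_div (fun _ => h.nonneg) h.tendsto_div_atTop _)
      (by positivity)
  have delta2 : conjNF ψ (2 * u) ≤ K * (s * u - ψ s) :=
    (hK.2 u (h.deriv_pos hs).le).trans (by gcongr)
  linarith

lemma two_pow_mul_deriv_le (h : IsDifferentiableNFunction ψ)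
    (hK : SatisfiesDelta2 (conjNF ψ) K) (k : ℕ) (hx : 0 < x) :
    2 ^ k * deriv ψ x ≤ 2 * deriv ψ (2 * (K / 2) ^ k * x) := by
  have hK0 : 0 < K := two_pos.trans hK.1
  have iterate (k : ℕ) : K ^ k * ψ (2 * x) ≤ ψ ((K / 2) ^ k * (2 * x)) := by
    induction k with
    | zero => simp
    | succ k ih =>
      calc K ^ (k + 1) * ψ (2 * x) = K * (K ^ k * ψ (2 * x)) := by ring
        _ ≤ K * ψ ((K / 2) ^ k * (2 * x)) := by gcongr
        _ ≤ ψ (K / 2 * ((K / 2) ^ k * (2 * x))) := h.mul_le_of_conjNF_delta2 hK (by positivity)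
        _ = ψ ((K / 2) ^ (k + 1) * (2 * x)) := by ring_nf
  refine le_of_mul_le_mul_left ?_ (show 0 < (K / 2) ^ k * x by positivity)
  calc (K / 2) ^ k * x * (2 ^ k * deriv ψ x) = K ^ k * (x * deriv ψ x) := by
        rw [div_pow]; field_simp
    _ ≤ K ^ k * ψ (2 * x) := by gcongr; exact h.mul_deriv_le hx
    _ ≤ ψ ((K / 2) ^ k * (2 * x)) := iterate k
    _ ≤ (K / 2) ^ k * (2 * x) * deriv ψ ((K / 2) ^ k * (2 * x)) := h.le_mul_deriv (by positivity)
    _ = (K / 2) ^ k * x * (2 * deriv ψ (2 * (K / 2) ^ k * x)) := by ring_nf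

lemma exists_mul_deriv_le_deriv_mul (K c : ℝ) :
    ∃ L ≥ 1, ∀ ψ, IsDifferentiableNFunction ψ → SatisfiesDelta2 (conjNF ψ) K →
      ∀ x > 0, c * deriv ψ x ≤ deriv ψ (L * x) := by
  obtain ⟨k, hk⟩ := pow_unbounded_of_one_lt (2 * c) one_lt_two
  have hpow : 1 ≤ (max K 2 / 2) ^ k := one_le_pow₀ (by linarith [le_max_right K 2])
  refine ⟨2 * (max K 2 / 2) ^ k, by linarith, fun ψ h hK x hx => ?_⟩
  rw [max_eq_left hK.1.le]
  have : 2 * c * deriv ψ x ≤ 2 ^ k * deriv ψ x := by gcongr; exact (h.deriv_pos hx).le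
  linarith [h.two_pow_mul_deriv_le hK k hx]

lemma shiftDF_le_mul (h : IsDifferentiableNFunction ψ) {D E : ℝ} (ha : 0 ≤ a) (hs : 0 < s)
    (hderiv : deriv ψ (a + s) ≤ D * deriv ψ (b + t)) (hdiv : s / (a + s) ≤ E * (t / (b + t))) :
    shiftDF ψ a s ≤ D * E * shiftDF ψ b t := by
  have hpos : 0 < deriv ψ (a + s) := h.deriv_pos (by positivity)
  calc shiftDF ψ a s = deriv ψ (a + s) * (s / (a + s)) := mul_div_assoc _ _ _
    _ ≤ D * deriv ψ (b + t) * (E * (t / (b + t))) :=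
        mul_le_mul hderiv hdiv (by positivity) (hpos.le.trans hderiv)
    _ = D * E * shiftDF ψ b t := by rw [shiftDF]; ring

end IsDifferentiableNFunction

lemma shiftDF_zero (ψ : ℝ → ℝ) (a : ℝ) : shiftDF ψ a 0 = 0 := by simp [shiftDF]

lemma shiftNF_zero (ψ : ℝ → ℝ) (a : ℝ) : shiftNF ψ a 0 = 0 := intervalIntegral.integral_same

namespace IsDifferentiableNFunction

variable {ψ : ℝ → ℝ} {a b s t : ℝ}

lemma shiftDF_nonneg (h : IsDifferentiableNFunction ψ) (ha : 0 ≤ a) (ht : 0 ≤ t) :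
    0 ≤ shiftDF ψ a t := by
  rcases ht.eq_or_lt with rfl | ht
  · rw [shiftDF_zero]
  · have := h.deriv_pos (x := a + t) (by positivity)
    unfold shiftDF
    positivity

lemma monotoneOn_shiftDF (h : IsDifferentiableNFunction ψ) (ha : 0 ≤ a) :
    MonotoneOn (shiftDF ψ a) (Ici 0) := by
  intro s (hs : 0 ≤ s) t _ hst
  rcases hs.eq_or_lt with rfl | hs
  · rw [shiftDF_zero]
    exact h.shiftDF_nonneg ha hst
  have ht : 0 < t := hs.trans_le hst
  have hderiv : deriv ψ (a + s) ≤ 1 * deriv ψ (a + t) := by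
    rw [one_mul]
    exact h.deriv_le_deriv (by positivity) (by gcongr)
  have hdiv : s / (a + s) ≤ 1 * (t / (a + t)) := by
    rw [one_mul, div_le_div_iff₀ (by positivity) (by positivity)]
    linarith [mul_le_mul_of_nonneg_left hst ha]
  simpa using h.shiftDF_le_mul ha hs hderiv hdiv

lemma intervalIntegrable_shiftDF (h : IsDifferentiableNFunction ψ) (ha : 0 ≤ a) (hs : 0 ≤ s)
    (ht : 0 ≤ t) : IntervalIntegrable (shiftDF ψ a) MeasureTheory.volume s t :=
  ((h.monotoneOn_shiftDF ha).mono fun _ hx => (le_min hs ht).trans hx.1).intervalIntegrable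

lemma shiftNF_tangent_le (h : IsDifferentiableNFunction ψ) (ha : 0 ≤ a) (hs : 0 ≤ s) (ht : 0 ≤ t) :
    shiftNF ψ a s + shiftDF ψ a s * (t - s) ≤ shiftNF ψ a t := by
  have hdiff : shiftNF ψ a t - shiftNF ψ a s = ∫ u in s..t, shiftDF ψ a u :=
    intervalIntegral.integral_interval_sub_left (h.intervalIntegrable_shiftDF ha le_rfl ht)
      (h.intervalIntegrable_shiftDF ha le_rfl hs)
  rcases le_total s t with hst | hts
  · have : ∫ _ in s..t, shiftDF ψ a s ≤ ∫ u in s..t, shiftDF ψ a u :=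
      intervalIntegral.integral_mono_on hst intervalIntegrable_const
        (h.intervalIntegrable_shiftDF ha hs ht)
        fun u hu => h.monotoneOn_shiftDF ha hs (hs.trans hu.1) hu.1
    rw [intervalIntegral.integral_const, smul_eq_mul] at this
    linarith
  · have : ∫ u in t..s, shiftDF ψ a u ≤ ∫ _ in t..s, shiftDF ψ a s :=
      intervalIntegral.integral_mono_on hts (h.intervalIntegrable_shiftDF ha ht hs)
        intervalIntegrable_const fun u hu => h.monotoneOn_shiftDF ha (ht.trans hu.1) hs hu.2
    rw [intervalIntegral.integral_const, smul_eq_mul] at this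
    rw [intervalIntegral.integral_symm] at hdiff
    linarith

lemma monotoneOn_shiftNF (h : IsDifferentiableNFunction ψ) (ha : 0 ≤ a) :
    MonotoneOn (shiftNF ψ a) (Ici 0) := fun _ hs _ ht hst => by
  linarith [h.shiftNF_tangent_le ha hs ht,
    mul_nonneg (h.shiftDF_nonneg ha hs) (sub_nonneg.2 hst)]

lemma shiftNF_nonneg (h : IsDifferentiableNFunction ψ) (ha : 0 ≤ a) (ht : 0 ≤ t) :
    0 ≤ shiftNF ψ a t :=
  (shiftNF_zero ψ a).ge.trans (h.monotoneOn_shiftNF ha self_mem_Ici ht ht)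

lemma shiftNF_le_mul_shiftDF (h : IsDifferentiableNFunction ψ) (ha : 0 ≤ a) (ht : 0 ≤ t) :
    shiftNF ψ a t ≤ t * shiftDF ψ a t := by
  linarith [h.shiftNF_tangent_le ha ht le_rfl, shiftNF_zero ψ a]

lemma mul_shiftDF_le_shiftNF (h : IsDifferentiableNFunction ψ) (ha : 0 ≤ a) (ht : 0 ≤ t) :
    t * shiftDF ψ a t ≤ shiftNF ψ a (2 * t) := by
  linarith [h.shiftNF_tangent_le ha ht (t := 2 * t) (by positivity), h.shiftNF_nonneg ha ht]

lemma shiftNF_mul_le (h : IsDifferentiableNFunction ψ) {k c : ℝ} (ha : 0 ≤ a) (hk : 0 ≤ k)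
    (ht : 0 ≤ t) (hkc : ∀ u ∈ Icc 0 t, shiftDF ψ a (k * u) ≤ c * shiftDF ψ a u) :
    shiftNF ψ a (k * t) ≤ k * (c * shiftNF ψ a t) := by
  have hmono : MonotoneOn (fun u => shiftDF ψ a (k * u)) (uIcc 0 t) := by
    rw [uIcc_of_le ht]
    exact fun u hu v hv huv => h.monotoneOn_shiftDF ha (mul_nonneg hk hu.1) (mul_nonneg hk hv.1)
      (mul_le_mul_of_nonneg_left huv hk)
  calc shiftNF ψ a (k * t) = k * ∫ u in (0 : ℝ)..t, shiftDF ψ a (k * u) := by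
        rw [intervalIntegral.mul_integral_comp_mul_left, mul_zero, shiftNF]
    _ ≤ k * ∫ u in (0 : ℝ)..t, c * shiftDF ψ a u := by
        gcongr
        exact intervalIntegral.integral_mono_on ht hmono.intervalIntegrable
          ((h.intervalIntegrable_shiftDF ha le_rfl ht).const_mul c) hkc
    _ = k * (c * shiftNF ψ a t) := by rw [intervalIntegral.integral_const_mul, shiftNF]

lemma shiftNF_mul_le_of_le_one (h : IsDifferentiableNFunction ψ) {k : ℝ} (ha : 0 ≤ a) (hk : 0 ≤ k)
    (hk1 : k ≤ 1) (ht : 0 ≤ t) : shiftNF ψ a (k * t) ≤ k * shiftNF ψ a t := by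
  simpa using h.shiftNF_mul_le (c := 1) ha hk ht fun u hu => by
    rw [one_mul]
    exact h.monotoneOn_shiftDF ha (mul_nonneg hk hu.1) hu.1 (mul_le_of_le_one_left hu.1 hk1)

lemma le_two_mul_shiftNF (h : IsDifferentiableNFunction ψ) (ha : 0 ≤ a) (hs : 0 < s)
    (has : a ≤ s) : ψ s ≤ 2 * shiftNF ψ a (2 * s) := by
  have hderiv : deriv ψ (0 + s) ≤ 1 * deriv ψ (a + s) := by
    rw [one_mul]
    exact h.deriv_le_deriv (by positivity) (by gcongr)
  have hdiv : s / (0 + s) ≤ 2 * (s / (a + s)) := by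
    rw [zero_add, div_self hs.ne', ← mul_div_assoc, one_le_div (by positivity)]
    linarith
  calc ψ s ≤ s * deriv ψ s := h.le_mul_deriv hs
    _ = s * shiftDF ψ 0 s := by rw [shiftDF, zero_add, mul_div_cancel_right₀ _ hs.ne']
    _ ≤ s * (1 * 2 * shiftDF ψ a s) := by
        gcongr
        exact h.shiftDF_le_mul le_rfl hs hderiv hdiv
    _ = 2 * (s * shiftDF ψ a s) := by ring
    _ ≤ 2 * shiftNF ψ a (2 * s) := by gcongr; exact h.mul_shiftDF_le_shiftNF ha hs.le

lemma tendsto_shiftNF_div_atTop (h : IsDifferentiableNFunction ψ) (ha : 0 ≤ a) :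
    Tendsto (fun t => shiftNF ψ a t / t) atTop atTop := by
  have hhalf : Tendsto (fun t : ℝ => t / 2) atTop atTop := tendsto_id.atTop_div_const two_pos
  refine tendsto_atTop_mono' atTop ?_
    ((h.tendsto_div_atTop.comp hhalf).atTop_div_const (show (0 : ℝ) < 4 by norm_num))
  filter_upwards [eventually_gt_atTop 0, hhalf.eventually_ge_atTop a] with t ht hat
  have hle := h.le_two_mul_shiftNF ha (half_pos ht) hat
  rw [mul_div_cancel₀ t two_ne_zero] at hle
  calc ψ (t / 2) / (t / 2) / 4 = ψ (t / 2) / 2 / t := by ring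
    _ ≤ shiftNF ψ a t / t := by gcongr; linarith

lemma bddAbove_mul_sub_shiftNF (h : IsDifferentiableNFunction ψ) (ha : 0 ≤ a) (t : ℝ) :
    BddAbove (range fun s : Ici (0 : ℝ) => (s : ℝ) * t - shiftNF ψ a s) :=
  bddAbove_mul_sub_of_tendsto_div (fun _ => h.shiftNF_nonneg ha) (h.tendsto_shiftNF_div_atTop ha) t

lemma shiftDF_two_mul_le (h : IsDifferentiableNFunction ψ) {C D : ℝ}
    (hD : ∀ x > 0, deriv ψ (2 * C * x) ≤ D * deriv ψ x) (ha : 0 ≤ a) (hb : 0 ≤ b) (ht : 0 < t)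
    (hab : a + 2 * t ≤ C * (b + 2 * t)) (hba : b + 2 * t ≤ C * (a + 2 * t)) :
    shiftDF ψ a (2 * t) ≤ D * (2 * C) * shiftDF ψ b t := by
  have hC : 0 < C := pos_of_mul_pos_left (by linarith : 0 < C * (b + 2 * t)) (by positivity)
  refine h.shiftDF_le_mul ha (by positivity) ?_ ?_
  · have : a + 2 * t ≤ 2 * C * (b + t) := by linarith [mul_nonneg hC.le hb]
    exact (h.deriv_le_deriv (by positivity) this).trans (hD _ (by positivity))
  · rw [← mul_div_assoc, div_le_div_iff₀ (by positivity) (by positivity)]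
    calc 2 * t * (b + t) ≤ 2 * t * (C * (a + 2 * t)) := by gcongr; linarith
      _ = 2 * C * t * (a + 2 * t) := by ring

lemma exists_shiftNF_le_mul_of_abs_sub_le (K : ℝ) {R : ℝ} (hR : 0 ≤ R) :
    ∃ c ≥ 1, ∀ ψ, IsDifferentiableNFunction ψ → SatisfiesDelta2 ψ K →
      ∀ a b t, 0 ≤ a → 0 ≤ b → 0 ≤ t → |a - b| ≤ R * t → shiftNF ψ a t ≤ c * shiftNF ψ b t := by
  obtain ⟨D, hD1, hD⟩ := exists_deriv_mul_le K (C := 2 * (1 + R)) (by positivity)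
  refine ⟨4 * (1 + R) * D, by nlinarith, fun ψ h hK a b t ha hb ht hab => ?_⟩
  rcases ht.eq_or_lt with rfl | ht
  · simp [shiftNF_zero]
  obtain ⟨s, rfl⟩ : ∃ s, t = 2 * s := ⟨t / 2, by ring⟩
  have hs : 0 < s := by linarith
  obtain ⟨hba, hab⟩ := abs_le.1 hab
  have hRa : 0 ≤ R * a := by positivity
  have hRb : 0 ≤ R * b := by positivity
  calc shiftNF ψ a (2 * s) ≤ 2 * s * shiftDF ψ a (2 * s) := h.shiftNF_le_mul_shiftDF ha ht.le
    _ ≤ 2 * s * (D * (2 * (1 + R)) * shiftDF ψ b s) := by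
        gcongr
        exact h.shiftDF_two_mul_le (hD ψ h hK) ha hb hs (by linarith) (by linarith)
    _ = 4 * (1 + R) * D * (s * shiftDF ψ b s) := by ring
    _ ≤ 4 * (1 + R) * D * shiftNF ψ b (2 * s) := by
        gcongr
        exact h.mul_shiftDF_le_shiftNF hb hs.le

lemma shiftDF_div_le (h : IsDifferentiableNFunction ψ) {c L : ℝ} (hc : 1 ≤ c) (hL1 : 1 ≤ L)
    (hL : ∀ x > 0, c * deriv ψ x ≤ deriv ψ (L * x)) (ha : 0 ≤ a) (ht : 0 ≤ t) :
    shiftDF ψ a (t / (c * L)) ≤ c⁻¹ * shiftDF ψ a t := by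
  rcases ht.eq_or_lt with rfl | ht
  · simp [shiftDF_zero]
  have hs : 0 < t / (c * L) := by positivity
  have hst : t / (c * L) ≤ t := div_le_self ht.le (one_le_mul_of_one_le_of_one_le hc hL1)
  -- Either `a` is so small that `ψ'` itself decays, or `a + t` is comparable to `a + t / (c * L)`.
  rcases le_total (L * (a + t / (c * L))) (a + t) with hsmall | hlarge
  · have hderiv : deriv ψ (a + t / (c * L)) ≤ c⁻¹ * deriv ψ (a + t) := by
      rw [le_inv_mul_iff₀ (by positivity)]
      exact (hL _ (by positivity)).trans (h.deriv_le_deriv (by positivity) hsmall)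
    have hdiv : t / (c * L) / (a + t / (c * L)) ≤ 1 * (t / (a + t)) := by
      rw [one_mul, div_le_div_iff₀ (by positivity) (by positivity)]
      linarith [mul_le_mul_of_nonneg_left hst ha]
    simpa using h.shiftDF_le_mul ha hs hderiv hdiv
  · have hderiv : deriv ψ (a + t / (c * L)) ≤ 1 * deriv ψ (a + t) := by
      rw [one_mul]
      exact h.deriv_le_deriv (by positivity) (by gcongr)
    have hdiv : t / (c * L) / (a + t / (c * L)) ≤ c⁻¹ * (t / (a + t)) := by
      calc t / (c * L) / (a + t / (c * L)) = c⁻¹ * (t / (L * (a + t / (c * L)))) := by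
            field_simp
        _ ≤ c⁻¹ * (t / (a + t)) := by gcongr
    simpa using h.shiftDF_le_mul ha hs hderiv hdiv

lemma exists_mul_shiftNF_div_le (K : ℝ) {c : ℝ} (hc : 1 ≤ c) :
    ∃ N > 0, ∀ ψ, IsDifferentiableNFunction ψ → SatisfiesDelta2 (conjNF ψ) K →
      ∀ a t, 0 ≤ a → 0 ≤ t → c * (N * shiftNF ψ a (t / N)) ≤ shiftNF ψ a t := by
  obtain ⟨L, hL1, hL⟩ := exists_mul_deriv_le_deriv_mul K c
  refine ⟨c * L, by positivity, fun ψ h hK a t ha ht => ?_⟩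
  have hscale : shiftNF ψ a ((c * L)⁻¹ * t) ≤ (c * L)⁻¹ * (c⁻¹ * shiftNF ψ a t) :=
    h.shiftNF_mul_le ha (by positivity) ht fun u hu => by
      rw [inv_mul_eq_div]
      exact h.shiftDF_div_le hc hL1 (hL ψ h hK) ha hu.1
  calc c * (c * L * shiftNF ψ a (t / (c * L)))
      ≤ c * (c * L * ((c * L)⁻¹ * (c⁻¹ * shiftNF ψ a t))) := by
        rw [div_eq_inv_mul]
        gcongr
    _ = shiftNF ψ a t := by field_simp

end IsDifferentiableNFunction

section ChangeOfShift

variable {δ : ℝ}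

open IsDifferentiableNFunction

lemma exists_mul_shiftNF_div_le_shiftNF_add (K₁ K₂ : ℝ) (hδ : 0 < δ) (hδ1 : δ ≤ 1) :
    ∃ N > 0, ∀ ψ, IsDifferentiableNFunction ψ → SatisfiesDelta2 ψ K₁ →
      SatisfiesDelta2 (conjNF ψ) K₂ → ∀ a b r s, 0 ≤ a → 0 ≤ b → |a - b| ≤ r → 0 ≤ s →
        N * shiftNF ψ b (s / N) ≤ shiftNF ψ a s + δ * shiftNF ψ a r := by
  obtain ⟨c, hc, hcomparable⟩ := exists_shiftNF_le_mul_of_abs_sub_le K₁ (inv_nonneg.2 hδ.le)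
  obtain ⟨N, hN, hdecay⟩ := exists_mul_shiftNF_div_le K₂ hc
  refine ⟨N, hN, fun ψ h hK₁ hK₂ a b r s ha hb hab hs => ?_⟩
  have hr : 0 ≤ r := (abs_nonneg _).trans hab
  have hlarge {u : ℝ} (hu : δ * r ≤ u) : N * shiftNF ψ b (u / N) ≤ shiftNF ψ a u := by
    have hu0 : 0 ≤ u := (by positivity : 0 ≤ δ * r).trans hu
    have hbau : |b - a| ≤ δ⁻¹ * u := by
      rw [abs_sub_comm]
      exact hab.trans ((le_inv_mul_iff₀ hδ).2 hu)
    exact le_of_mul_le_mul_left ((hdecay ψ h hK₂ b u hb hu0).trans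
      (hcomparable ψ h hK₁ b a u hb ha hu0 hbau)) (by positivity)
  rcases le_total (δ * r) s with hrs | hsr
  · exact (hlarge hrs).trans (le_add_of_nonneg_right (mul_nonneg hδ.le (h.shiftNF_nonneg ha hr)))
  · calc N * shiftNF ψ b (s / N) ≤ N * shiftNF ψ b (δ * r / N) := by
          gcongr
          exact h.monotoneOn_shiftNF hb (mem_Ici.2 (by positivity)) (mem_Ici.2 (by positivity))
            (by gcongr)
      _ ≤ shiftNF ψ a (δ * r) := hlarge le_rfl
      _ ≤ δ * shiftNF ψ a r := h.shiftNF_mul_le_of_le_one ha hδ.le hδ1 hr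
      _ ≤ shiftNF ψ a s + δ * shiftNF ψ a r := le_add_of_nonneg_left (h.shiftNF_nonneg ha hs)

lemma exists_shiftNF_le_mul_add (K : ℝ) (hδ : 0 < δ) (hδ1 : δ ≤ 1) :
    ∃ c > 0, ∀ ψ, IsDifferentiableNFunction ψ → SatisfiesDelta2 ψ K →
      ∀ a b r t, 0 ≤ a → 0 ≤ b → |a - b| ≤ r → 0 ≤ t →
        shiftNF ψ a t ≤ c * shiftNF ψ b t + δ * shiftNF ψ a r := by
  obtain ⟨c, hc, hcomparable⟩ := exists_shiftNF_le_mul_of_abs_sub_le K (inv_nonneg.2 hδ.le)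
  refine ⟨c, by positivity, fun ψ h hK a b r t ha hb hab ht => ?_⟩
  have hr : 0 ≤ r := (abs_nonneg _).trans hab
  rcases le_total (δ * r) t with hrt | htr
  · exact (hcomparable ψ h hK a b t ha hb ht (hab.trans ((le_inv_mul_iff₀ hδ).2 hrt))).trans
      (le_add_of_nonneg_right (mul_nonneg hδ.le (h.shiftNF_nonneg ha hr)))
  · calc shiftNF ψ a t ≤ shiftNF ψ a (δ * r) :=
          h.monotoneOn_shiftNF ha ht (ht.trans htr) htr
      _ ≤ δ * shiftNF ψ a r := h.shiftNF_mul_le_of_le_one ha hδ.le hδ1 hr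
      _ ≤ c * shiftNF ψ b t + δ * shiftNF ψ a r :=
          le_add_of_nonneg_left (mul_nonneg (by positivity) (h.shiftNF_nonneg hb ht))

theorem change_of_shift_general (K₁ K₂ : ℝ) (hδ : 0 < δ) (hδ1 : δ ≤ 1) :
    ∃ c > 0, ∀ ψ, IsDifferentiableNFunction ψ →
      SatisfiesDelta2 ψ K₁ → SatisfiesDelta2 (conjNF ψ) K₂ →
      ∀ a b r t, 0 ≤ a → 0 ≤ b → |a - b| ≤ r → 0 ≤ t →
        shiftNF ψ a t ≤ c * shiftNF ψ b t + δ * shiftNF ψ a r ∧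
          conjNF (shiftNF ψ a) t ≤ c * conjNF (shiftNF ψ b) t + δ * shiftNF ψ a r := by
  obtain ⟨c, hc, hshift⟩ := exists_shiftNF_le_mul_add K₁ hδ hδ1
  obtain ⟨N, hN, hdual⟩ := exists_mul_shiftNF_div_le_shiftNF_add K₁ K₂ hδ hδ1
  refine ⟨max c N, by positivity, fun ψ h hK₁ hK₂ a b r t ha hb hab ht => ⟨?_, ?_⟩⟩
  · have := h.shiftNF_nonneg hb ht
    exact (hshift ψ h hK₁ a b r t ha hb hab ht).trans (by gcongr; exact le_max_left c N)
  · have : 0 ≤ conjNF (shiftNF ψ b) t := conjNF_nonneg (shiftNF_zero ψ b).le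
    exact (conjNF_le_mul_add_of_mul_div_le hN (h.bddAbove_mul_sub_shiftNF hb t) fun s hs =>
      hdual ψ h hK₁ hK₂ a b r s ha hb hab hs).trans (by gcongr; exact le_max_right c N)

end ChangeOfShift

lemma frobNorm_nonneg {d n : ℕ} (P : Fin d → Fin n → ℝ) : 0 ≤ frobNorm P := Real.sqrt_nonneg _

lemma frobNorm_eq_norm {d n : ℕ} (P : Fin d → Fin n → ℝ) :
    frobNorm P = ‖WithLp.toLp 2 (fun p : Fin d × Fin n => P p.1 p.2)‖ := by
  simp [EuclideanSpace.norm_eq, frobNorm, Fintype.sum_prod_type]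

lemma abs_frobNorm_sub_frobNorm_le {d n : ℕ} (P Q : Fin d → Fin n → ℝ) :
    |frobNorm P - frobNorm Q| ≤ frobNorm (P - Q) := by
  simp only [frobNorm_eq_norm]
  exact abs_norm_sub_norm_le _ _

/-- change of shift: for every `δ ∈ (0,1)` there is `c_δ > 0`, depending
only on `δ` and the Δ₂-constants of `ψ` and `ψ*`, such that
`ψ_{|P|}(t) ≤ c_δ·ψ_{|Q|}(t) + δ·ψ_{|P|}(|P−Q|)` and
`(ψ_{|P|})*(t) ≤ c_δ·(ψ_{|Q|})*(t) + δ·ψ_{|P|}(|P−Q|)`. -/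
theorem change_of_shift (K₁ K₂ δ : ℝ) (hδ : 0 < δ) (hδ' : δ < 1) :
    ∃ c > (0:ℝ), ∀ ψ : ℝ → ℝ, IsRegularNFunction ψ →
      SatisfiesDelta2 ψ K₁ → SatisfiesDelta2 (conjNF ψ) K₂ →
      ∀ d n : ℕ, 1 ≤ d → 1 ≤ n → ∀ P Q : Fin d → Fin n → ℝ, ∀ t ≥ (0:ℝ),
        shiftNF ψ (frobNorm P) t ≤
            c * shiftNF ψ (frobNorm Q) t + δ * shiftNF ψ (frobNorm P) (frobNorm (P - Q)) ∧
          conjNF (shiftNF ψ (frobNorm P)) t ≤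
            c * conjNF (shiftNF ψ (frobNorm Q)) t +
              δ * shiftNF ψ (frobNorm P) (frobNorm (P - Q)) := by
  obtain ⟨c, hc, h⟩ := change_of_shift_general K₁ K₂ hδ hδ'.le
  exact ⟨c, hc, fun ψ hψ hK₁ hK₂ d n _ _ P Q t ht =>
    h ψ hψ.isDifferentiableNFunction hK₁ hK₂ _ _ _ t (frobNorm_nonneg P) (frobNorm_nonneg Q)
      (abs_frobNorm_sub_frobNorm_le P Q) ht⟩

end
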